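/- (Lemma 3.1(i), d = 2.) Let Ω ⊆ ℝ² be a bounded open set with 0 ∈ Ω, r > 0, T the inversion in the sphere of radius r centered at the origin, σ the 1-dimensional Hausdorff measure restricted to ∂Ω, and σ* the 1-dimensional Hausdorff measure restricted to ∂Ω* := T(∂Ω). Let ν : ℝ² → ℝ² be any map, and define ν*(T x) := −R_x ν(x) on ∂Ω*, where R_x = I − 2(x/|x|)(x/|x|)ᵗ. Let φ : ℝ² → ℝ be bounded Borel measurable with σ(∂Ω) < ∞ and define φ*(T y) := φ(y)|y|²/r². Then for every x ∈ ∂Ω (necessarily x ≠ 0) such that y ↦ ⟨ν(x), ∇Γ(x−y)⟩φ(y) is σ-integrable, ∫_{∂Ω*} ⟨ν*(Tx), ∇Γ(Tx − z)⟩ φ*(z) dσ*(z) = −(|x|²/r²) ∫_{∂Ω} ⟨ν(x), ∇Γ(x − y)⟩ φ(y) dσ(y) + (∫_{∂Ω} φ dσ) · ⟨x, ν(x)⟩/(2π r²), where ∇Γ(z) = z/(2π|z|²). -/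

import Mathlib

open MeasureTheory
open scoped Real RealInnerProductSpace ENNReal

/-!
Write `τ` for the inversion and `ρ y = r² / |y|²`. Since `|τ x - τ y|² = ρ x ρ y |x - y|²`, the map
`τ` is conformal with scale factor `ρ`, and on the shell `tⁿ ≤ ρ < tⁿ⁺¹` it is bi-Lipschitz with
constants `tⁿ` and `tⁿ⁺¹`. Summing the resulting Hausdorff measure estimates over `n : ℤ` and
letting `t → 1` gives the area formula `μH[1] (τ '' s) = ∫_s ρ dμH[1]`
(`hausdorffMeasure_image_inversion`), hence the change of variables `z = τ y` in integrals. The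
factor `ρ y` cancels against `φ* (τ y) = φ y / ρ y`, and what remains is the pointwise identity
`kernel_identity` relating the two kernels, valid for `y ≠ x`. The exceptional point `y = x` is
`μH[1]`-null, so the claim follows by linearity of the integral.
-/

/-- The Euclidean plane. -/
local notation "ℝ²" => EuclideanSpace ℝ (Fin 2)

open EuclideanGeometry in
lemma measurable_inversion_zero (r : ℝ) : Measurable (inversion (0 : ℝ²) r) := by
  unfold inversion
  simp only [vsub_eq_sub, vadd_eq_add]
  fun_prop

open EuclideanGeometry in
/-- The inversion in the sphere of radius `r` about the origin as a measurable involution; the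
origin is fixed. -/
noncomputable def inversionEquiv (r : ℝ) (hr : r ≠ 0) : ℝ² ≃ᵐ ℝ² where
  toFun := inversion 0 r
  invFun := inversion 0 r
  left_inv := inversion_involutive 0 hr
  right_inv := inversion_involutive 0 hr
  measurable_toFun := measurable_inversion_zero r
  measurable_invFun := measurable_inversion_zero r

/-- The local scale factor `r² / |y|²` of the inversion (equal to `0` at the origin, by the
convention for division). -/
noncomputable def scaleFactor (r : NNReal) (y : ℝ²) : NNReal := (r / ‖y‖₊) ^ 2

lemma measurable_scaleFactor (r : NNReal) : Measurable (scaleFactor r) := by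
  unfold scaleFactor; fun_prop

lemma dist_inversionEquiv_sq (r : NNReal) (hr : (r : ℝ) ≠ 0) {x y : ℝ²} (hx : x ≠ 0) (hy : y ≠ 0) :
    dist (inversionEquiv r hr x) (inversionEquiv r hr y) ^ 2
      = scaleFactor r x * scaleFactor r y * dist x y ^ 2 := by
  have := EuclideanGeometry.dist_inversion_inversion hx hy (r : ℝ)
  change dist (EuclideanGeometry.inversion 0 _ x) (EuclideanGeometry.inversion 0 _ y) ^ 2 = _
  rw [this]
  simp [scaleFactor]
  have := norm_ne_zero_iff.2 hx
  have := norm_ne_zero_iff.2 hy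
  field_simp

lemma ne_zero_of_scaleFactor_pos {r : NNReal} {x : ℝ²} (h : 0 < scaleFactor r x) : x ≠ 0 := by
  rintro rfl
  simp [scaleFactor] at h

/-- On a shell where the scale factor lies between `a` and `b`, the inversion distorts Hausdorff
measure by a factor between `a` and `b`. -/
lemma shell_estimate (r : NNReal) (hr : (r : ℝ) ≠ 0) {a b : NNReal} (ha : 0 < a) {s : Set ℝ²}
    (hs : ∀ y ∈ s, a ≤ scaleFactor r y ∧ scaleFactor r y ≤ b) :
    μH[1] (inversionEquiv r hr '' s) ≤ b * μH[1] s ∧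
      a * μH[1] s ≤ μH[1] (inversionEquiv r hr '' s) := by
  have hne : ∀ y ∈ s, y ≠ 0 := fun y hy => ne_zero_of_scaleFactor_pos (ha.trans_le (hs y hy).1)
  constructor
  · have hL : LipschitzOnWith b (inversionEquiv r hr) s := by
      refine LipschitzOnWith.of_dist_le_mul fun x hx y hy => ?_
      refine le_of_sq_le_sq ?_ (by positivity)
      rw [dist_inversionEquiv_sq r hr (hne x hx) (hne y hy), mul_pow, sq (b : ℝ)]
      have h1 : (scaleFactor r x : ℝ) ≤ b := mod_cast (hs x hx).2
      have h2 : (scaleFactor r y : ℝ) ≤ b := mod_cast (hs y hy).2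
      gcongr
    simpa using hL.hausdorffMeasure_image_le (d := 1) zero_le_one
  · have hL : LipschitzOnWith a⁻¹ (inversionEquiv r hr).symm (inversionEquiv r hr '' s) := by
      refine LipschitzOnWith.of_dist_le_mul ?_
      rintro _ ⟨x, hx, rfl⟩ _ ⟨y, hy, rfl⟩
      rw [MeasurableEquiv.symm_apply_apply, MeasurableEquiv.symm_apply_apply, NNReal.coe_inv,
        ← div_eq_inv_mul, le_div_iff₀ (by exact_mod_cast ha)]
      refine le_of_sq_le_sq ?_ (by positivity)
      rw [dist_inversionEquiv_sq r hr (hne x hx) (hne y hy), mul_pow, mul_comm, sq (a : ℝ)]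
      have h1 : (a : ℝ) ≤ scaleFactor r x := mod_cast (hs x hx).1
      have h2 : (a : ℝ) ≤ scaleFactor r y := mod_cast (hs y hy).1
      gcongr
    have h := hL.hausdorffMeasure_image_le (d := 1) zero_le_one
    rw [Set.image_image] at h
    simp only [MeasurableEquiv.symm_apply_apply, Set.image_id', ENNReal.rpow_one] at h
    rw [ENNReal.coe_inv ha.ne', mul_comm, ← div_eq_mul_inv] at h
    rwa [mul_comm, ← ENNReal.le_div_iff_mul_le (by simp [ha.ne']) (by simp)]

/-- The shells `tⁿ ≤ ρ < tⁿ⁺¹` cut out everything except the origin, where `ρ` takes the junk value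
`0`; so a measure not charging the origin is the sum of its parts on the shells. -/
lemma shell_sum (r : NNReal) (hr : (r : ℝ) ≠ 0) (m : Measure ℝ²) (hm : m {0} = 0)
    {s : Set ℝ²} (hs : MeasurableSet s) {t : NNReal} (ht : 1 < t) :
    m s = ∑' n : ℤ,
      m (s ∩ (fun y => (scaleFactor r y : ℝ≥0∞)) ⁻¹' Set.Ico (t ^ n) (t ^ (n + 1))) := by
  have h := measure_eq_measure_preimage_add_measure_tsum_Ico_zpow m
    (measurable_scaleFactor r).coe_nnreal_ennreal hs ht
  have h0 : m (s ∩ (fun y => (scaleFactor r y : ℝ≥0∞)) ⁻¹' {0}) = 0 := by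
    refine measure_mono_null ?_ hm
    rintro y ⟨-, hy⟩
    have hr' : r ≠ 0 := mod_cast hr
    simpa [scaleFactor, hr'] using hy
  have h1 : s ∩ (fun y => (scaleFactor r y : ℝ≥0∞)) ⁻¹' {∞} = ∅ := by
    ext y; simp
  rw [h0, h1] at h
  simpa using h

/-- The area formula for the inversion and one-dimensional Hausdorff measure. -/
lemma hausdorffMeasure_image_inversion (r : NNReal) (hr : (r : ℝ) ≠ 0) {s : Set ℝ²}
    (hs : MeasurableSet s) :
    μH[1] (inversionEquiv r hr '' s)
      = (μH[1]).withDensity (fun y => (scaleFactor r y : ℝ≥0∞)) s := by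
  set e := inversionEquiv r hr with he
  set f : ℝ² → ℝ≥0∞ := fun y => (scaleFactor r y : ℝ≥0∞) with hf
  have hfm : Measurable f := (measurable_scaleFactor r).coe_nnreal_ennreal
  have := Measure.nullSingletonClass_hausdorff ℝ² (zero_lt_one (α := ℝ))
  set m : Measure ℝ² := (μH[1]).map e.symm with hm
  set n : Measure ℝ² := (μH[1]).withDensity f with hn
  have hme : ∀ u, m u = μH[1] (e '' u) := fun u => by
    rw [hm, e.symm.map_apply, ← e.image_eq_preimage_symm]
  have hm0 : m {0} = 0 := by rw [hme, Set.image_singleton]; exact measure_singleton _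
  have hn0 : n {0} = 0 := withDensity_absolutelyContinuous _ _ (measure_singleton _)
  -- Both measures agree up to a factor `t` on each shell.
  have key : ∀ t : NNReal, 1 < t → ∀ k : ℤ,
      m (s ∩ f ⁻¹' Set.Ico (t ^ k) (t ^ (k + 1))) ≤
        t * n (s ∩ f ⁻¹' Set.Ico (t ^ k) (t ^ (k + 1))) ∧
      n (s ∩ f ⁻¹' Set.Ico (t ^ k) (t ^ (k + 1))) ≤
        t * m (s ∩ f ⁻¹' Set.Ico (t ^ k) (t ^ (k + 1))) := by
    intro t ht k
    have ht0 : t ≠ 0 := (zero_lt_one.trans ht).ne'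
    set A := s ∩ f ⁻¹' Set.Ico (t ^ k) (t ^ (k + 1)) with hA
    have hAm : MeasurableSet A := hs.inter (hfm measurableSet_Ico)
    have hcoe : ∀ j : ℤ, ((t : ℝ≥0∞) ^ j) = ((t ^ j : NNReal) : ℝ≥0∞) :=
      fun j => (ENNReal.coe_zpow ht0 j).symm
    have hfA : ∀ y ∈ A, ((t ^ k : NNReal) : ℝ≥0∞) ≤ f y ∧ f y ≤ ((t ^ (k + 1) : NNReal) : ℝ≥0∞) := by
      rintro y ⟨-, hy⟩
      rw [← hcoe, ← hcoe]
      exact ⟨hy.1, hy.2.le⟩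
    have hS := shell_estimate r hr (a := t ^ k) (b := t ^ (k + 1)) (s := A) (by positivity)
      fun y hy => ⟨ENNReal.coe_le_coe.1 (hfA y hy).1, ENNReal.coe_le_coe.1 (hfA y hy).2⟩
    rw [← he, ← hme] at hS
    have hmul : ((t ^ (k + 1) : NNReal) : ℝ≥0∞) = t * ((t ^ k : NNReal) : ℝ≥0∞) := by
      rw [← ENNReal.coe_mul, zpow_add_one₀ ht0, mul_comm]
    have hnA : n A = ∫⁻ y in A, f y ∂μH[1] := withDensity_apply _ hAm
    have hlow : ((t ^ k : NNReal) : ℝ≥0∞) * μH[1] A ≤ n A := by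
      rw [hnA, ← setLIntegral_const]
      exact setLIntegral_mono' hAm fun y hy => (hfA y hy).1
    have hup : n A ≤ ((t ^ (k + 1) : NNReal) : ℝ≥0∞) * μH[1] A := by
      rw [hnA, ← setLIntegral_const]
      exact setLIntegral_mono' hAm fun y hy => (hfA y hy).2
    rw [hmul, mul_assoc] at hup hS
    exact ⟨hS.1.trans (by gcongr), hup.trans (by gcongr; exact hS.2)⟩
  -- A comparison up to every factor `t > 1` is a comparison.
  have lim : ∀ a b : ℝ≥0∞, (∀ t : NNReal, 1 < t → a ≤ t * b) → a ≤ b := by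
    intro a b h
    have hc : Filter.Tendsto (fun t : NNReal => (t : ℝ≥0∞) * b) (nhdsWithin 1 (Set.Ioi 1))
        (nhds (((1 : NNReal) : ℝ≥0∞) * b)) :=
      (ENNReal.Tendsto.mul_const (ENNReal.continuous_coe.tendsto 1) (Or.inl (by simp))).mono_left
        nhdsWithin_le_nhds
    have := ge_of_tendsto hc (Filter.eventually_of_mem self_mem_nhdsWithin h)
    simpa using this
  rw [← hme]
  apply le_antisymm <;> refine lim _ _ fun t ht => ?_
  · rw [shell_sum r hr m hm0 hs ht, shell_sum r hr n hn0 hs ht, ← ENNReal.tsum_mul_left]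
    exact ENNReal.tsum_le_tsum fun k => (key t ht k).1
  · rw [shell_sum r hr m hm0 hs ht, shell_sum r hr n hn0 hs ht, ← ENNReal.tsum_mul_left]
    exact ENNReal.tsum_le_tsum fun k => (key t ht k).2

lemma setIntegral_image_inversion (r : NNReal) (hr : (r : ℝ) ≠ 0) {s : Set ℝ²}
    (hs : MeasurableSet s) (g : ℝ² → ℝ) :
    ∫ z in inversionEquiv r hr '' s, g z ∂μH[1]
      = ∫ y in s, (scaleFactor r y : ℝ) * g (inversionEquiv r hr y) ∂μH[1] := by
  set e := inversionEquiv r hr with he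
  have hmap : (μH[1] : Measure ℝ²)
      = ((μH[1]).withDensity (fun y => (scaleFactor r y : ℝ≥0∞))).map e := by
    ext u hu
    rw [e.map_apply, ← hausdorffMeasure_image_inversion r hr (e.measurable hu),
      ← he, Set.image_preimage_eq u e.surjective]
  conv_lhs => rw [hmap]
  rw [e.measurableEmbedding.setIntegral_map, Set.preimage_image_eq _ e.injective,
    setIntegral_withDensity_eq_setIntegral_smul (measurable_scaleFactor r) _ hs]
  rfl

/-- Transformation of the kernel: with `v* = -R_x v`, the Neumann–Poincaré kernel at the inverted
points is an affine expression in the kernel at the original points. -/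
lemma kernel_identity (r : ℝ) (hr : 0 < r) {x y v : ℝ²} (hx : x ≠ 0) (hy : y ≠ 0) (hxy : y ≠ x) :
    ⟪-(v - (2 * ⟪x, v⟫ / ‖x‖ ^ 2) • x),
      (2 * π * ‖(r ^ 2 / ‖x‖ ^ 2) • x - (r ^ 2 / ‖y‖ ^ 2) • y‖ ^ 2)⁻¹ •
        ((r ^ 2 / ‖x‖ ^ 2) • x - (r ^ 2 / ‖y‖ ^ 2) • y)⟫
      = -(‖x‖ ^ 2 / r ^ 2) * ⟪v, (2 * π * ‖x - y‖ ^ 2)⁻¹ • (x - y)⟫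
        + ⟪x, v⟫ / (2 * π * r ^ 2) := by
  have hx' := norm_ne_zero_iff.2 hx
  have hy' := norm_ne_zero_iff.2 hy
  have hd : ‖x - y‖ ≠ 0 := norm_ne_zero_iff.2 (sub_ne_zero.2 hxy.symm)
  have hnorm : ‖(r ^ 2 / ‖x‖ ^ 2) • x - (r ^ 2 / ‖y‖ ^ 2) • y‖ ^ 2
      = r ^ 4 * ‖x - y‖ ^ 2 / (‖x‖ ^ 2 * ‖y‖ ^ 2) := by
    rw [norm_sub_sq_real, norm_sub_sq_real, norm_smul, norm_smul, inner_smul_left,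
      inner_smul_right]
    simp only [Real.norm_eq_abs, mul_pow, sq_abs, conj_trivial]
    field_simp
    ring
  have hd2 : ‖x - y‖ ^ 2 = ‖x‖ ^ 2 - 2 * ⟪x, y⟫ + ‖y‖ ^ 2 := norm_sub_sq_real x y
  have hπ := Real.pi_ne_zero
  rw [hnorm]
  simp only [inner_smul_right, inner_sub_right, inner_neg_left, inner_sub_left, inner_smul_left,
    conj_trivial, real_inner_self_eq_norm_sq, real_inner_comm x v]
  have hd2' : ‖x - y‖ ^ 2 ≠ 0 := pow_ne_zero _ hd
  generalize ‖x - y‖ ^ 2 = D at hd2 hd2' ⊢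
  field_simp
  subst hd2
  ring

/-- Lemma 3.1(i), `d = 2`: transformation of the Neumann–Poincaré operator under
inversion in a sphere centered at an interior point `0 ∈ Ω`:
`K*_{∂Ω*}[φ*](Tx) = −(|x|²/r²) K*_{∂Ω}[φ](x) + (∫_{∂Ω} φ dσ)(x·ν_x)/(2πr²)`,
with `∇Γ(z) = z/(2π|z|²)`, `φ*(Ty) = φ(y)|y|²/r²`, and `ν*(Tx) = −R_x ν(x)`. -/
theorem np_inversion_interior_dim2
    (r : ℝ) (hr : 0 < r) (Ω : Set (EuclideanSpace ℝ (Fin 2)))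
    (hopen : IsOpen Ω) (hbd : Bornology.IsBounded Ω) (h0 : (0 : EuclideanSpace ℝ (Fin 2)) ∈ Ω)
    (T : EuclideanSpace ℝ (Fin 2) → EuclideanSpace ℝ (Fin 2))
    (hT : ∀ x : EuclideanSpace ℝ (Fin 2), x ≠ 0 → T x = (r ^ 2 / ‖x‖ ^ 2) • x)
    (σ σs : Measure (EuclideanSpace ℝ (Fin 2)))
    (hσ : σ = μH[1].restrict (frontier Ω))
    (hσs : σs = μH[1].restrict (T '' frontier Ω))
    (hfin : σ (frontier Ω) < ⊤)
    (R : EuclideanSpace ℝ (Fin 2) → EuclideanSpace ℝ (Fin 2) → EuclideanSpace ℝ (Fin 2))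
    (hR : ∀ x v : EuclideanSpace ℝ (Fin 2), x ≠ 0 →
      R x v = v - (2 * ⟪x, v⟫ / ‖x‖ ^ 2) • x)
    (ν νs : EuclideanSpace ℝ (Fin 2) → EuclideanSpace ℝ (Fin 2))
    (hνs : ∀ x ∈ frontier Ω, νs (T x) = -(R x (ν x)))
    (φ : EuclideanSpace ℝ (Fin 2) → ℝ) (hφmeas : Measurable φ)
    (hφbdd : ∃ C, ∀ y, |φ y| ≤ C)
    (φs : EuclideanSpace ℝ (Fin 2) → ℝ)
    (hφs : ∀ y ∈ frontier Ω, φs (T y) = φ y * ‖y‖ ^ 2 / r ^ 2)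
    (x : EuclideanSpace ℝ (Fin 2)) (hxΩ : x ∈ frontier Ω)
    (hint : Integrable
      (fun y => ⟪ν x, (2 * π * ‖x - y‖ ^ 2)⁻¹ • (x - y)⟫ * φ y) σ) :
    ∫ z, ⟪νs (T x), (2 * π * ‖T x - z‖ ^ 2)⁻¹ • (T x - z)⟫ * φs z ∂σs =
      -(‖x‖ ^ 2 / r ^ 2) *
          ∫ y, ⟪ν x, (2 * π * ‖x - y‖ ^ 2)⁻¹ • (x - y)⟫ * φ y ∂σ
        + (∫ y, φ y ∂σ) * (⟪x, ν x⟫ / (2 * π * r ^ 2)) := by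
  have hx0 : ∀ y ∈ frontier Ω, y ≠ 0 := by
    rintro y hy rfl
    rw [hopen.frontier_eq] at hy
    exact hy.2 h0
  lift r to NNReal using hr.le
  have hr' : (r : ℝ) ≠ 0 := hr.ne'
  set F := frontier Ω with hF
  have hFm : MeasurableSet F := isClosed_frontier.measurableSet
  have hTe : ∀ y ∈ F, T y = inversionEquiv r hr' y := by
    intro y hy
    rw [hT y (hx0 y hy)]
    change _ = EuclideanGeometry.inversion 0 (r : ℝ) y
    simp [EuclideanGeometry.inversion, div_pow]
  have himg : T '' F = inversionEquiv r hr' '' F := Set.image_congr hTe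
  have := Measure.nullSingletonClass_hausdorff (EuclideanSpace ℝ (Fin 2)) (zero_lt_one (α := ℝ))
  have hFfin : μH[1] F < ⊤ := by simpa [hσ] using hfin
  have hφint : Integrable φ σ := by
    have : IsFiniteMeasure σ := ⟨by simpa [hσ] using hFfin⟩
    obtain ⟨C, hC⟩ := hφbdd
    exact Integrable.of_bound hφmeas.aestronglyMeasurable C (Filter.Eventually.of_forall hC)
  rw [← integral_const_mul, ← integral_mul_const,
    ← integral_add (hint.const_mul _) (hφint.mul_const _), hσs, himg,
    setIntegral_image_inversion r hr' hFm, hσ]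
  -- The pointwise identity fails only at `y = x`, a null set.
  refine setIntegral_congr_ae hFm ?_
  filter_upwards [compl_mem_ae_iff.2 (measure_singleton x)] with y hyx hy
  have hyx : y ≠ x := hyx
  have hyn := norm_ne_zero_iff.2 (hx0 y hy)
  have hcancel : (scaleFactor r y : ℝ) * φs (T y) = φ y := by
    rw [hφs y hy]
    simp only [scaleFactor, NNReal.coe_pow, NNReal.coe_div, coe_nnnorm]
    field_simp
  rw [← hTe y hy, mul_left_comm, hcancel, hνs x hxΩ, hR x _ (hx0 x hxΩ), hT x (hx0 x hxΩ),
    hT y (hx0 y hy), kernel_identity r hr (hx0 x hxΩ) (hx0 y hy) hyx]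
  ring
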